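/- arXiv:1106.1189 — 2 statements merged into one kernel-verified Lean document; each statement's English description precedes it below -/
import Mathlib

section
/- Let k ≥ 7 be an integer, define W_k(z) = ((2π)^{2k−1} 2^{2k}/(2k)!) ∑_{j=0}^{k} (−1)^j B_{2j} B_{2k−2j} (1−2^{1−2j})(1−2^{1−2k+2j}) C(2k,2j) z^{2j}, let A_0 = −((2π)^{2k−1} 2^{2k}/(2k)!)(1−2^{1−2k}) B_{2k} be the constant coefficient of W_k(iz), and define the Laurent polynomial w̃_k(z) = (z^k + z^{−k}) + (π²/6)(z^{k−2} + z^{2−k}) + (2/(1−2^{1−2k})) ∑_{m=0}^{k−4} z^{k−4−2m}. Then for every complex number z with |z| = 1, |z^{−k} W_k(iz)/A_0 − w̃_k(z)| < 0.3. -/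
/-- `W_k(z) = ((2π)^{2k−1} 2^{2k}/(2k)!) ∑_{j=0}^{k} (−1)^j B_{2j} B_{2k−2j}
(1−2^{1−2j})(1−2^{1−2k+2j}) C(2k,2j) z^{2j}`. -/
noncomputable def Wfun (k : ℕ) (z : ℂ) : ℂ :=
  (((2 * Real.pi) ^ (2 * k - 1) * 2 ^ (2 * k) / (Nat.factorial (2 * k)) : ℝ) : ℂ) *
    ∑ j ∈ Finset.range (k + 1),
      (-1 : ℂ) ^ j * ((bernoulli (2 * j) : ℚ) : ℂ) * ((bernoulli (2 * k - 2 * j) : ℚ) : ℂ)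
        * (1 - (2 : ℂ) ^ (1 - 2 * (j : ℤ))) * (1 - (2 : ℂ) ^ (1 - 2 * (k : ℤ) + 2 * j))
        * ((Nat.choose (2 * k) (2 * j)) : ℂ) * z ^ (2 * j)

/-- `A_0 = −((2π)^{2k−1} 2^{2k}/(2k)!)(1−2^{1−2k}) B_{2k}`, the constant
coefficient of `W_k(iz)`. -/
noncomputable def WA0 (k : ℕ) : ℂ :=
  -((((2 * Real.pi) ^ (2 * k - 1) * 2 ^ (2 * k) / (Nat.factorial (2 * k)) : ℝ) : ℂ)
      * (1 - (2 : ℂ) ^ (1 - 2 * (k : ℤ))) * ((bernoulli (2 * k) : ℚ) : ℂ))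

/-- The Laurent polynomial `w̃_k(z) = (z^k + z^{−k}) + (π²/6)(z^{k−2} + z^{2−k})
+ (2/(1−2^{1−2k})) ∑_{m=0}^{k−4} z^{k−4−2m}`. -/
noncomputable def wtilde (k : ℕ) (z : ℂ) : ℂ :=
  (z ^ (k : ℤ) + z ^ (-(k : ℤ)))
    + ((Real.pi : ℂ) ^ 2 / 6) * (z ^ ((k : ℤ) - 2) + z ^ (2 - (k : ℤ)))
    + 2 / (1 - (2 : ℂ) ^ (1 - 2 * (k : ℤ))) *
        ∑ m ∈ Finset.range (k - 3), z ^ ((k : ℤ) - 4 - 2 * (m : ℤ))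

/-!
Write `η(s) = ∑ (-1)^n / (n + 1)^s`. By Euler, `(1 - 2^{1-2j}) B_{2j}` is `η(2j)` up to an
elementary factor, also at `j = 0` if `η(0) = 1/2`, and in `z^{-k} W_k(iz) / A_0` these factors and
the binomial coefficients cancel: the coefficient of `z^{2j-k}` is `2 η(2j) η(2k-2j) / η(2k)`. As
`1 - 4^{-j} ≤ η(2j) ≤ 1`, up to the symmetry `j ↔ k - j` it is `1` for `j = 0`, close to
`2 η(2) = π²/6` for `j = 1`, and close to `2` otherwise. The coefficientwise errors add up to about
`4 ∑_{j ≥ 2} (1 - η(2j)) ≈ 0.29`; the `j = 2` term needs the exact value `η(4) = 7π⁴/720`, and the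
others are summed geometrically.
-/

open Finset Real
open scoped Nat

lemma sum_range_succ_eq_ends_add_sum_Ico {M : Type*} [AddCommMonoid M] (f : ℕ → M) {k : ℕ}
    (hk : 3 ≤ k) :
    ∑ j ∈ range (k + 1), f j = f 0 + f k + (f 1 + f (k - 1)) + ∑ j ∈ Ico 2 (k - 1), f j := by
  obtain ⟨n, rfl⟩ := Nat.exists_eq_add_of_le' hk
  rw [sum_range_succ, sum_range_succ, ← sum_range_add_sum_Ico f (show 2 ≤ n + 2 by lia)]
  simp only [sum_range_succ, sum_range_zero, zero_add, Nat.add_succ_sub_one]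
  abel

lemma norm_sum_ofReal_mul_zpow_le {ι : Type*} (s : Finset ι) (c : ι → ℝ) (n : ι → ℤ)
    {z : ℂ} (hz : ‖z‖ = 1) : ‖∑ i ∈ s, (c i : ℂ) * z ^ n i‖ ≤ ∑ i ∈ s, |c i| :=
  norm_sum_le_of_le _ fun i _ ↦ by simp [hz]

lemma sub_four_mul_quarter_pow_le (k : ℕ) : ((k : ℝ) - 4) * (1 / 4) ^ k ≤ (1 / 4) ^ 5 := by
  rcases le_or_gt k 4 with hk | hk
  · have hk' : (k : ℝ) ≤ 4 := mod_cast hk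
    exact (mul_nonpos_of_nonpos_of_nonneg (by linarith) (by positivity)).trans (by positivity)
  · obtain ⟨m, rfl⟩ := Nat.exists_eq_add_of_le' hk
    have hm : (m : ℝ) + 1 ≤ 4 ^ m := mod_cast m.lt_pow_self (by norm_num)
    rw [pow_add, ← mul_assoc]
    refine mul_le_of_le_one_left (by positivity) ?_
    rw [one_div_pow, mul_one_div]
    refine div_le_one_of_le₀ ?_ (by positivity)
    push_cast
    linarith

section AlternatingSeries

variable {s : ℕ} {l : ℝ}

lemma antitone_one_div_add_one_pow (s : ℕ) : Antitone fun n : ℕ ↦ 1 / ((n : ℝ) + 1) ^ s := by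
  intro m n hmn
  dsimp only
  gcongr

lemma one_sub_half_pow_le_of_hasSum
    (h : HasSum (fun n : ℕ ↦ (-1) ^ n * (1 / ((n : ℝ) + 1) ^ s)) l) : 1 - (1 / 2) ^ s ≤ l := by
  have hbound := (antitone_one_div_add_one_pow s).alternating_series_le_tendsto
    h.tendsto_sum_nat 1
  norm_num [sum_range_succ] at hbound
  simp only [one_div, inv_pow]
  linarith

lemma le_one_sub_half_pow_div_two_of_hasSum (hs : 2 ≤ s)
    (h : HasSum (fun n : ℕ ↦ (-1) ^ n * (1 / ((n : ℝ) + 1) ^ s)) l) :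
    l ≤ 1 - (1 / 2) ^ s / 2 := by
  have hbound := (antitone_one_div_add_one_pow s).tendsto_le_alternating_series
    h.tendsto_sum_nat 1
  have hthird : (1 / 3 : ℝ) ^ s ≤ (1 / 2) ^ s / 2 := calc
    (1 / 3 : ℝ) ^ s = (1 / 2) ^ s * (2 / 3) ^ s := by rw [← mul_pow]; norm_num
    _ ≤ (1 / 2) ^ s * (2 / 3) ^ 2 :=
      mul_le_mul_of_nonneg_left (pow_le_pow_of_le_one (by norm_num) (by norm_num) hs)
        (by positivity)
    _ ≤ (1 / 2) ^ s / 2 := by linarith [show (0 : ℝ) < (1 / 2) ^ s by positivity]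
  norm_num [sum_range_succ] at hbound
  simp only [one_div, inv_pow] at hthird ⊢
  linarith

end AlternatingSeries

section EvenEta

/-- The value `η(2j)` of the Dirichlet eta function `η(s) = ∑ (-1)^n / (n + 1)^s`, in Euler's closed
form `(-1)^j (2π)^{2j} B_{2j}(1/2) / (2 (2j)!)`, which extends it by `η(0) = 1/2`. -/
noncomputable def evenEta (j : ℕ) : ℝ :=
  (-1) ^ j * (2 * π) ^ (2 * j) / 2 / (2 * j)! * bernoulliFun (2 * j) 2⁻¹

lemma bernoulliFun_half_eq_mul_evenEta (j : ℕ) :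
    bernoulliFun (2 * j) 2⁻¹ = (-1) ^ j * 2 * (2 * j)! / (2 * π) ^ (2 * j) * evenEta j := by
  have hsign : ((-1 : ℝ) ^ j) * (-1) ^ j = 1 := by rw [← mul_pow]; norm_num
  unfold evenEta
  field_simp
  linear_combination -bernoulliFun (2 * j) (1 / 2) * hsign

lemma evenEta_zero : evenEta 0 = 1 / 2 := by simp [evenEta]

lemma evenEta_one : evenEta 1 = π ^ 2 / 12 := by
  norm_num [evenEta]
  ring

lemma evenEta_two : evenEta 2 = 7 * π ^ 4 / 720 := by
  rw [evenEta, bernoulliFun_eval_half, bernoulli_eq_bernoulli'_of_ne_one (by norm_num)]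
  norm_num [Nat.factorial]
  ring

variable {j : ℕ}

lemma hasSum_evenEta (hj : j ≠ 0) :
    HasSum (fun n : ℕ ↦ (-1) ^ n * (1 / ((n : ℝ) + 1) ^ (2 * j))) (evenEta j) := by
  have hcos := hasSum_one_div_nat_pow_mul_cos hj (x := 2⁻¹) ⟨by norm_num, by norm_num⟩
  have hshift := ((hasSum_nat_add_iff' 1).mpr hcos).neg
  convert! hshift using 1
  · ext n
    rw [show 2 * π * ((n + 1 : ℕ) : ℝ) * 2⁻¹ = (n + 1 : ℕ) * π by ring, cos_nat_mul_pi]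
    push_cast
    ring
  · rw [evenEta, bernoulliFun]
    simp [hj]
    ring

lemma one_sub_quarter_pow_le_evenEta (hj : j ≠ 0) : 1 - (1 / 4) ^ j ≤ evenEta j := by
  have h := one_sub_half_pow_le_of_hasSum (hasSum_evenEta hj)
  norm_num [pow_mul] at h ⊢
  exact h

lemma evenEta_le_one_sub_quarter_pow_div_two (hj : j ≠ 0) :
    evenEta j ≤ 1 - (1 / 4) ^ j / 2 := by
  have h := le_one_sub_half_pow_div_two_of_hasSum (by lia) (hasSum_evenEta hj)
  norm_num [pow_mul] at h ⊢
  exact h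

lemma evenEta_le_one (hj : j ≠ 0) : evenEta j ≤ 1 :=
  (evenEta_le_one_sub_quarter_pow_div_two hj).trans (sub_le_self _ (by positivity))

lemma quarter_pow_le_quarter (hj : j ≠ 0) : (1 / 4 : ℝ) ^ j ≤ 1 / 4 :=
  pow_le_of_le_one (by norm_num) (by norm_num) hj

lemma evenEta_pos (hj : j ≠ 0) : 0 < evenEta j := by
  linarith [one_sub_quarter_pow_le_evenEta hj, quarter_pow_le_quarter hj]

lemma evenEta_le_evenEta_succ (hj : j ≠ 0) : evenEta j ≤ evenEta (j + 1) := calc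
  evenEta j ≤ 1 - (1 / 4) ^ j / 2 := evenEta_le_one_sub_quarter_pow_div_two hj
  _ ≤ 1 - (1 / 4) ^ (j + 1) := by
    rw [pow_succ]
    linarith [show (0 : ℝ) < (1 / 4) ^ j by positivity]
  _ ≤ evenEta (j + 1) := one_sub_quarter_pow_le_evenEta j.succ_ne_zero

lemma one_sub_evenEta_two_le : 1 - evenEta 2 ≤ 0.053 := by
  have hpi : (3.141592 : ℝ) ^ 4 ≤ π ^ 4 := by
    gcongr
    exact pi_gt_d6.le
  rw [evenEta_two]
  norm_num at hpi ⊢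
  linarith

lemma sum_Ico_one_sub_evenEta_le {k : ℕ} (hk : 3 ≤ k) :
    ∑ j ∈ Ico 2 k, (1 - evenEta j) ≤ 0.053 + 1 / 48 - 4 / 3 * (1 / 4) ^ k := by
  induction k, hk using Nat.le_induction with
  | base =>
    norm_num
    linarith [one_sub_evenEta_two_le]
  | succ k hk ih =>
    rw [sum_Ico_succ_top (by lia), pow_succ]
    linarith [one_sub_quarter_pow_le_evenEta (show k ≠ 0 by lia)]

end EvenEta

section Coefficients

variable {k j : ℕ}

/-- The coefficient of `z^{2j-k}` in `z^{-k} W_k(iz) / A_0`, for `j ≤ k`. -/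
noncomputable def WCoeff (k j : ℕ) : ℝ := 2 * evenEta j * evenEta (k - j) / evenEta k

lemma WCoeff_zero (hk : k ≠ 0) : WCoeff k 0 = 1 := by
  simp [WCoeff, evenEta_zero, (evenEta_pos hk).ne']

lemma WCoeff_sub (hj : j ≤ k) : WCoeff k (k - j) = WCoeff k j := by
  rw [WCoeff, WCoeff, Nat.sub_sub_self hj]
  ring

lemma choose_mul_bernoulliFun_half_div_eq_WCoeff (hj : j ≤ k) :
    (2 * k).choose (2 * j) * bernoulliFun (2 * j) 2⁻¹ * bernoulliFun (2 * (k - j)) 2⁻¹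
      / bernoulliFun (2 * k) 2⁻¹ = WCoeff k j := by
  obtain ⟨m, rfl⟩ := Nat.exists_eq_add_of_le hj
  have hchoose : ((2 * (j + m)).choose (2 * j) : ℝ) = (2 * (j + m))! / ((2 * j)! * (2 * m)!) := by
    rw [mul_add, Nat.cast_add_choose]
  have hcommon : ((-1 : ℝ) ^ (j + m) * 2 * (2 * (j + m))! / (2 * π) ^ (2 * (j + m))) ≠ 0 := by
    positivity
  have hnum : (2 * (j + m)).choose (2 * j) * bernoulliFun (2 * j) 2⁻¹ * bernoulliFun (2 * m) 2⁻¹ =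
      (-1) ^ (j + m) * 2 * (2 * (j + m))! / (2 * π) ^ (2 * (j + m))
        * (2 * evenEta j * evenEta m) := by
    rw [hchoose, bernoulliFun_half_eq_mul_evenEta j, bernoulliFun_half_eq_mul_evenEta m,
      mul_add, pow_add, pow_add]
    field_simp
  rw [Nat.add_sub_cancel_left, hnum, bernoulliFun_half_eq_mul_evenEta (j + m),
    mul_div_mul_left _ _ hcommon, WCoeff, Nat.add_sub_cancel_left]

lemma abs_WCoeff_one_sub_le (hk : 2 ≤ k) :
    |WCoeff k 1 - π ^ 2 / 6| ≤ 2 * (1 - evenEta (k - 1)) := by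
  obtain ⟨m, rfl⟩ := Nat.exists_eq_add_of_le' (show 1 ≤ k by lia)
  have hm : m ≠ 0 := by lia
  have hpos := evenEta_pos m.succ_ne_zero
  have hpi : π ^ 2 ≤ 12 := by nlinarith [pi_lt_d2, pi_pos]
  have hratio_le : evenEta m / evenEta (m + 1) ≤ 1 :=
    div_le_one_of_le₀ (evenEta_le_evenEta_succ hm) hpos.le
  have hle_ratio : evenEta m ≤ evenEta m / evenEta (m + 1) :=
    le_div_self (evenEta_pos hm).le hpos (evenEta_le_one m.succ_ne_zero)
  have hfactor : WCoeff (m + 1) 1 - π ^ 2 / 6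
      = -(π ^ 2 / 6 * (1 - evenEta m / evenEta (m + 1))) := by
    rw [WCoeff, evenEta_one, Nat.add_sub_cancel]
    ring
  rw [hfactor, abs_neg, abs_of_nonneg (mul_nonneg (by positivity) (by linarith)),
    Nat.add_sub_cancel]
  gcongr
  linarith

lemma abs_WCoeff_sub_le (hj : j ≠ 0) (hjk : j < k) :
    |WCoeff k j - 2 / (1 - 2 * (1 / 4) ^ k)| ≤
      2 * ((1 - evenEta j) + (1 - evenEta (k - j))) + 4 * (1 / 4) ^ k / (1 - 2 * (1 / 4) ^ k) := by
  have hk : k ≠ 0 := by lia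
  have hkj : k - j ≠ 0 := by lia
  have hj_le := evenEta_le_one hj
  have hkj_le := evenEta_le_one hkj
  have hkj_pos := evenEta_pos hkj
  have hj_pos := evenEta_pos hj
  have hk_ge := one_sub_quarter_pow_le_evenEta hk
  have hq_pos : (0 : ℝ) < (1 / 4) ^ k := by positivity
  have hden : (0 : ℝ) < 1 - 2 * (1 / 4) ^ k := by linarith [quarter_pow_le_quarter hk]
  have hupper : WCoeff k j ≤ 2 / (1 - 2 * (1 / 4) ^ k) := by
    unfold WCoeff
    gcongr
    · nlinarith
    · linarith
  have hlower : 2 * evenEta j * evenEta (k - j) ≤ WCoeff k j :=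
    le_div_self (by positivity) (evenEta_pos hk) (evenEta_le_one hk)
  have htarget : 2 / (1 - 2 * (1 / 4 : ℝ) ^ k) = 2 + 4 * (1 / 4) ^ k / (1 - 2 * (1 / 4) ^ k) := by
    field_simp
    ring
  rw [abs_sub_comm, abs_of_nonneg (by linarith), htarget]
  linarith [mul_nonneg (sub_nonneg.2 hj_le) (sub_nonneg.2 hkj_le)]

lemma sum_abs_WCoeff_sub_le (hk : 3 ≤ k) :
    ∑ j ∈ Ico 2 (k - 1), |WCoeff k j - 2 / (1 - 2 * (1 / 4) ^ k)| ≤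
      4 * ∑ j ∈ Ico 2 (k - 1), (1 - evenEta j)
        + (k - 3) * (4 * (1 / 4) ^ k / (1 - 2 * (1 / 4) ^ k)) := by
  have hreflect : ∑ j ∈ Ico 2 (k - 1), (1 - evenEta (k - j)) =
      ∑ j ∈ Ico 2 (k - 1), (1 - evenEta j) := by
    rw [sum_Ico_reflect (fun j ↦ 1 - evenEta j) 2 (by lia)]
    congr 2
    lia
  have hcard : ((k - 1 - 2 : ℕ) : ℝ) = k - 3 := by
    rw [Nat.sub_sub, Nat.cast_sub hk]
    norm_num
  calc ∑ j ∈ Ico 2 (k - 1), |WCoeff k j - 2 / (1 - 2 * (1 / 4) ^ k)|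
    _ ≤ ∑ j ∈ Ico 2 (k - 1), (2 * ((1 - evenEta j) + (1 - evenEta (k - j)))
          + 4 * (1 / 4) ^ k / (1 - 2 * (1 / 4) ^ k)) := by
      refine sum_le_sum fun j hj ↦ ?_
      rw [mem_Ico] at hj
      exact abs_WCoeff_sub_le (by lia) (by lia)
    _ = _ := by
      rw [sum_add_distrib, ← mul_sum, sum_add_distrib, hreflect, sum_const, Nat.card_Ico,
        nsmul_eq_mul, hcard]
      ring

end Coefficients

section LaurentPolynomials

variable {k : ℕ} {z : ℂ}

lemma bernoulli_mul_one_sub_two_zpow (n : ℕ) :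
    ((bernoulli n : ℚ) : ℂ) * (1 - 2 ^ (1 - (n : ℤ))) = -(bernoulliFun n 2⁻¹ : ℂ) := by
  rw [bernoulliFun_eval_half, zpow_sub₀ two_ne_zero, zpow_one, zpow_natCast]
  push_cast
  ring

/-- The common factor `(2π)^{2k-1} 2^{2k} / (2k)!` of `W_k` and `A_0`, which cancels in their
quotient. -/
noncomputable def WPrefactor (k : ℕ) : ℝ := (2 * π) ^ (2 * k - 1) * 2 ^ (2 * k) / (2 * k)!

lemma WPrefactor_ne_zero (k : ℕ) : WPrefactor k ≠ 0 := by
  unfold WPrefactor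
  positivity

lemma WA0_eq_mul_bernoulliFun_half (k : ℕ) :
    WA0 k = (WPrefactor k : ℂ) * (bernoulliFun (2 * k) 2⁻¹ : ℂ) := by
  have h := bernoulli_mul_one_sub_two_zpow (2 * k)
  push_cast at h
  rw [WA0, ← WPrefactor]
  linear_combination -(WPrefactor k : ℂ) * h

lemma Wfun_I_mul_eq_sum_bernoulliFun_half (k : ℕ) (z : ℂ) :
    Wfun k (Complex.I * z) = (WPrefactor k : ℂ) *
      ∑ j ∈ range (k + 1), (((2 * k).choose (2 * j) * bernoulliFun (2 * j) 2⁻¹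
        * bernoulliFun (2 * (k - j)) 2⁻¹ : ℝ) : ℂ) * z ^ (2 * j) := by
  rw [Wfun, ← WPrefactor]
  congr 1
  refine sum_congr rfl fun j hj ↦ ?_
  have hjk : j ≤ k := mem_range_succ_iff.mp hj
  have hfirst := bernoulli_mul_one_sub_two_zpow (2 * j)
  have hsecond := bernoulli_mul_one_sub_two_zpow (2 * (k - j))
  have hexp : 1 - ((2 * (k - j) : ℕ) : ℤ) = 1 - 2 * (k : ℤ) + 2 * j := by
    push_cast [hjk]
    ring
  have hI : (-1 : ℂ) ^ j * (Complex.I * z) ^ (2 * j) = z ^ (2 * j) := by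
    rw [mul_pow, pow_mul Complex.I, Complex.I_sq, ← mul_assoc, ← mul_pow]
    norm_num
  rw [hexp] at hsecond
  push_cast at hfirst ⊢
  rw [← Nat.mul_sub, ← hI]
  linear_combination ((-1) ^ j * ((2 * k).choose (2 * j) : ℂ) * (Complex.I * z) ^ (2 * j))
    * congrArg₂ (· * ·) hfirst hsecond

lemma zpow_neg_mul_Wfun_div_WA0 (k : ℕ) (hz : z ≠ 0) :
    z ^ (-(k : ℤ)) * Wfun k (Complex.I * z) / WA0 k =
      ∑ j ∈ range (k + 1), (WCoeff k j : ℂ) * z ^ (2 * (j : ℤ) - k) := by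
  rw [mul_div_assoc, WA0_eq_mul_bernoulliFun_half, Wfun_I_mul_eq_sum_bernoulliFun_half,
    mul_div_mul_left _ _ (Complex.ofReal_ne_zero.mpr (WPrefactor_ne_zero k)), sum_div, mul_sum]
  refine sum_congr rfl fun j hj ↦ ?_
  have hpow : z ^ (2 * (j : ℤ)) = z ^ (2 * j) := mod_cast rfl
  rw [← choose_mul_bernoulliFun_half_div_eq_WCoeff (mem_range_succ_iff.mp hj), sub_eq_neg_add,
    zpow_add₀ hz, hpow, Complex.ofReal_div]
  ring

lemma wtilde_eq_add_sum_Ico (k : ℕ) (z : ℂ) :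
    wtilde k z = (z ^ (k : ℤ) + z ^ (-(k : ℤ)))
      + ((π ^ 2 / 6 : ℝ) : ℂ) * (z ^ ((k : ℤ) - 2) + z ^ (2 - (k : ℤ)))
      + ∑ j ∈ Ico 2 (k - 1), ((2 / (1 - 2 * (1 / 4) ^ k) : ℝ) : ℂ) * z ^ (2 * (j : ℤ) - k) := by
  have htwo : (2 : ℂ) ^ (1 - 2 * (k : ℤ)) = 2 * (1 / 4) ^ k := by
    rw [zpow_sub₀ two_ne_zero, zpow_one, zpow_mul, zpow_natCast, div_pow]
    norm_num
    rfl
  rw [wtilde, htwo, ← mul_sum, ← sum_range_reflect, sum_Ico_eq_sum_range, Nat.sub_sub]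
  push_cast
  congr 2
  refine sum_congr rfl fun m hm ↦ ?_
  rw [mem_range] at hm
  congr 1
  lia

lemma zpow_neg_mul_Wfun_div_WA0_sub_wtilde (hk : 3 ≤ k) (hz : z ≠ 0) :
    z ^ (-(k : ℤ)) * Wfun k (Complex.I * z) / WA0 k - wtilde k z =
      ((WCoeff k 1 - π ^ 2 / 6 : ℝ) : ℂ) * (z ^ ((k : ℤ) - 2) + z ^ (2 - (k : ℤ)))
      + ∑ j ∈ Ico 2 (k - 1),
          ((WCoeff k j - 2 / (1 - 2 * (1 / 4) ^ k) : ℝ) : ℂ) * z ^ (2 * (j : ℤ) - k) := by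
  have hk0 : k ≠ 0 := by lia
  have hlast : WCoeff k k = 1 := by simpa [WCoeff_zero hk0] using WCoeff_sub k.zero_le
  have hexp_last : 2 * (k : ℤ) - k = k := by ring
  have hexp_penult : 2 * ((k - 1 : ℕ) : ℤ) - k = k - 2 := by lia
  rw [zpow_neg_mul_Wfun_div_WA0 k hz, wtilde_eq_add_sum_Ico k,
    sum_range_succ_eq_ends_add_sum_Ico _ hk, WCoeff_zero hk0, hlast, WCoeff_sub (by lia),
    hexp_last, hexp_penult]
  simp only [Complex.ofReal_sub _ (2 / _), sub_mul, sum_sub_distrib]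
  push_cast
  ring_nf

lemma norm_zpow_neg_mul_Wfun_div_WA0_sub_wtilde_le (hk : 3 ≤ k) (hz : ‖z‖ = 1) :
    ‖z ^ (-(k : ℤ)) * Wfun k (Complex.I * z) / WA0 k - wtilde k z‖ ≤
      2 * |WCoeff k 1 - π ^ 2 / 6|
        + ∑ j ∈ Ico 2 (k - 1), |WCoeff k j - 2 / (1 - 2 * (1 / 4) ^ k)| := by
  have hz0 : z ≠ 0 := norm_ne_zero_iff.mp (by simp [hz])
  have hpair : ‖z ^ ((k : ℤ) - 2) + z ^ (2 - (k : ℤ))‖ ≤ 2 := by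
    refine (norm_add_le _ _).trans ?_
    simp only [norm_zpow, hz, one_zpow]
    norm_num
  rw [zpow_neg_mul_Wfun_div_WA0_sub_wtilde hk hz0]
  refine (norm_add_le _ _).trans (add_le_add ?_ (norm_sum_ofReal_mul_zpow_le _ _ _ hz))
  rw [norm_mul, Complex.norm_real, norm_eq_abs, mul_comm]
  gcongr

end LaurentPolynomials

lemma four_mul_sum_one_sub_evenEta_add_lt {k : ℕ} (hk : 3 ≤ k) :
    4 * ∑ j ∈ Ico 2 k, (1 - evenEta j)
      + (k - 3) * (4 * (1 / 4) ^ k / (1 - 2 * (1 / 4) ^ k)) < 0.3 := by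
  have hsum := sum_Ico_one_sub_evenEta_le hk
  have hlinear := sub_four_mul_quarter_pow_le k
  have hk' : (3 : ℝ) ≤ k := mod_cast hk
  have hq_pos : (0 : ℝ) < (1 / 4) ^ k := by positivity
  have hq_le : (1 / 4 : ℝ) ^ k ≤ (1 / 4) ^ 3 :=
    pow_le_pow_of_le_one (by norm_num) (by norm_num) hk
  have hquot : 4 * (1 / 4 : ℝ) ^ k / (1 - 2 * (1 / 4) ^ k) ≤ 128 / 31 * (1 / 4) ^ k := by
    rw [div_le_iff₀ (by linarith)]
    nlinarith
  have herror := mul_le_mul_of_nonneg_left hquot (sub_nonneg.mpr hk')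
  norm_num at hsum hlinear ⊢
  linarith

theorem Wfun_close_to_wtilde_general (k : ℕ) (hk : 3 ≤ k) :
    ∀ z : ℂ, ‖z‖ = 1 →
      ‖z ^ (-(k : ℤ)) * Wfun k (Complex.I * z) / WA0 k - wtilde k z‖
        < 0.3 := by
  intro z hz
  have hsplit : ∑ j ∈ Ico 2 k, (1 - evenEta j) =
      ∑ j ∈ Ico 2 (k - 1), (1 - evenEta j) + (1 - evenEta (k - 1)) := by
    rw [← sum_Ico_succ_top (by lia), Nat.sub_add_cancel (by lia)]
  calc ‖z ^ (-(k : ℤ)) * Wfun k (Complex.I * z) / WA0 k - wtilde k z‖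
    _ ≤ 2 * |WCoeff k 1 - π ^ 2 / 6|
          + ∑ j ∈ Ico 2 (k - 1), |WCoeff k j - 2 / (1 - 2 * (1 / 4) ^ k)| :=
      norm_zpow_neg_mul_Wfun_div_WA0_sub_wtilde_le hk hz
    _ ≤ 4 * ∑ j ∈ Ico 2 k, (1 - evenEta j)
          + (k - 3) * (4 * (1 / 4) ^ k / (1 - 2 * (1 / 4) ^ k)) := by
      linarith [abs_WCoeff_one_sub_le (show 2 ≤ k by lia), sum_abs_WCoeff_sub_le hk]
    _ < 0.3 := four_mul_sum_one_sub_evenEta_add_lt hk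

/-- For `k ≥ 7` and every `z` on the unit circle,
`|z^{−k} W_k(iz)/A_0 − w̃_k(z)| < 0.3`. -/
theorem Wfun_close_to_wtilde (k : ℕ) (hk : 7 ≤ k) :
    ∀ z : ℂ, ‖z‖ = 1 →
      ‖z ^ (-(k : ℤ)) * Wfun k (Complex.I * z) / WA0 k - wtilde k z‖
        < 0.3 :=
  Wfun_close_to_wtilde_general k (by lia)
end

section
/- Let k ≥ 2 be an integer, and let A_0, A_1, …, A_{4k} be the real coefficients determined by the polynomial identity ∑_{j=0}^{4k} A_j z^j = ((2/π) ∑_{j=0}^{k} ζ(2j) ζ(2k−2j) z^{2j})² + ζ(2k−1)² (z^{2k−1} − z)², where ζ(0) = −1/2 and ζ(2j) = ∑_{n=1}^∞ n^{−2j} for j ≥ 1. Then 4k(k−1)|A_{4k}| = ∑_{j=0}^{4k} |A_{4k} − A_j|. -/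
/-- `zetaVal m = ∑_{n=1}^∞ n^{−m}`, the value of the Riemann zeta function
at the integer `m`. -/
noncomputable def zetaVal (m : ℕ) : ℝ := ∑' n : ℕ, 1 / ((n : ℝ) + 1) ^ m

/-- `ζ` extended so that `ζ(0) = −1/2`. -/
noncomputable def zetaVal' (m : ℕ) : ℝ := if m = 0 then -(1 / 2) else zetaVal m

/-- The polynomial `∑_{j=0}^{4k} A_j z^j
= ((2/π) ∑_{j=0}^{k} ζ(2j) ζ(2k−2j) z^{2j})² + ζ(2k−1)² (z^{2k−1} − z)²`,
which equals `|P_k(iz)|²` for real `z`. -/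
noncomputable def absPpoly (k : ℕ) : Polynomial ℝ :=
  (Polynomial.C (2 / Real.pi) *
      ∑ j ∈ Finset.range (k + 1),
        Polynomial.C (zetaVal' (2 * j) * zetaVal' (2 * k - 2 * j)) * Polynomial.X ^ (2 * j)) ^ 2
    + Polynomial.C ((zetaVal (2 * k - 1)) ^ 2)
        * (Polynomial.X ^ (2 * k - 1) - Polynomial.X) ^ 2

/-!
Every coefficient of odd index vanishes, so `absPpoly k = R(z²)` with
`R(x) = (4/π²) Q(x)² + ζ(2k−1)² (x^{2k−1} − 2x^k + x)`, where `Q` has the coefficients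
`c_j = ζ(2j)ζ(2k−2j)`. If `A_{4k}` is the least of the even-index coefficients and is nonnegative,
then the absolute values can be removed and the right-hand side equals `R(1) − A_{4k}`. Euler's
formula `∑ c_j = (k − 1/2) ζ(2k)` gives `R(1) = (2k − 1)² A_{4k}`, which is the claim since
`(2k − 1)² − 1 = 4k(k − 1)`.

Minimality: `R` is palindromic, so only `R_0 ≤ R_m` with `1 ≤ m ≤ k` matters. As
`c_0 = −ζ(2k)/2`, this compares `ζ(2k)² + 4 ζ(2k) c_m` with
`4 ∑_{0<i<m} c_i c_{m−i}`, corrected by multiples of `π² ζ(2k−1)²` for `m = 1` and `m = k`.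
Crude bounds suffice except for `k = 2`, where `ζ(3)` is needed to two decimals.
-/

open Finset

section Sums

open Polynomial

theorem sum_range_two_mul_add_one {M : Type*} [AddCommMonoid M] (f : ℕ → M) (n : ℕ) :
    ∑ j ∈ range (2 * n + 1), f j
      = ∑ j ∈ range (n + 1), f (2 * j) + ∑ j ∈ range n, f (2 * j + 1) := by
  induction n with
  | zero => simp
  | succ n ih =>
    rw [Nat.mul_succ, sum_range_succ, sum_range_succ, ih, sum_range_succ _ (n + 1),
      sum_range_succ (fun j ↦ f (2 * j + 1)) n]
    simp only [Nat.mul_succ]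
    abel

theorem coeff_sq_eq_add_sum_Ioo {R : Type*} [CommSemiring R] (p : R[X]) {m : ℕ} (hm : 0 < m) :
    (p ^ 2).coeff m
      = 2 * p.coeff 0 * p.coeff m + ∑ i ∈ Ioo 0 m, p.coeff i * p.coeff (m - i) := by
  rw [sq, coeff_mul, Nat.sum_antidiagonal_eq_sum_range_succ_mk, sum_range_succ, range_eq_Ico,
    ← add_sum_Ioo_eq_sum_Ico hm, Nat.sub_self, Nat.sub_zero]
  ring

theorem sum_abs_coeff_expand_two_sub {R : Type*} [CommRing R] [LinearOrder R]
    [IsStrictOrderedRing R] {p : R[X]} {n : ℕ} (hdeg : p.natDegree ≤ n) (hn : 0 ≤ p.coeff n)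
    (hmin : ∀ j ≤ n, p.coeff n ≤ p.coeff j) :
    ∑ j ∈ range (2 * n + 1), |(expand R 2 p).coeff (2 * n) - (expand R 2 p).coeff j|
      = p.eval 1 - p.coeff n := by
  have heven : ∀ j ∈ range (n + 1), |p.coeff n - (expand R 2 p).coeff (2 * j)|
      = p.coeff j - p.coeff n := fun j hj ↦ by
    rw [coeff_expand_mul' two_pos, abs_sub_comm,
      abs_of_nonneg (sub_nonneg.2 (hmin j (mem_range_succ_iff.1 hj)))]
  have hodd : ∀ j ∈ range n, |p.coeff n - (expand R 2 p).coeff (2 * j + 1)| = p.coeff n :=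
    fun j _ ↦ by rw [coeff_expand two_pos, if_neg (by lia), sub_zero, abs_of_nonneg hn]
  rw [coeff_expand_mul' two_pos, sum_range_two_mul_add_one, sum_congr rfl heven,
    sum_congr rfl hodd, sum_sub_distrib, eval_eq_sum_range' (Nat.lt_succ_of_le hdeg)]
  simp only [one_pow, mul_one, sum_const, card_range, nsmul_eq_mul]
  push_cast
  ring

end Sums

section Bernoulli

theorem bernoulliPowerSeries_sq (A : Type*) [CommRing A] [Algebra ℚ A] :
    bernoulliPowerSeries A ^ 2 = bernoulliPowerSeries A - PowerSeries.X * bernoulliPowerSeries A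
      - PowerSeries.X * PowerSeries.derivative A (bernoulliPowerSeries A) := by
  have hB := bernoulliPowerSeries_mul_exp_sub_one A
  have hB' := congrArg (PowerSeries.derivative A) hB
  simp only [Derivation.leibniz, map_sub, PowerSeries.derivative_exp, smul_eq_mul,
    PowerSeries.derivative_X, Derivation.map_one_eq_zero, sub_zero] at hB'
  linear_combination bernoulliPowerSeries A * hB' - bernoulliPowerSeries A * hB
    - PowerSeries.derivative A (bernoulliPowerSeries A) * hB

theorem sum_range_bernoulli_div_factorial_mul (n : ℕ) :
    ∑ i ∈ range (n + 2), (bernoulli i / i.factorial)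
        * (bernoulli (n + 1 - i) / (n + 1 - i).factorial)
      = -n * (bernoulli (n + 1) / (n + 1).factorial) - bernoulli n / n.factorial := by
  have h := congrArg (PowerSeries.coeff (n + 1)) (bernoulliPowerSeries_sq ℚ)
  rw [sq, PowerSeries.coeff_mul, Nat.sum_antidiagonal_eq_sum_range_succ_mk, map_sub, map_sub,
    PowerSeries.coeff_succ_X_mul, PowerSeries.coeff_succ_X_mul, PowerSeries.coeff_derivative] at h
  simp only [bernoulliPowerSeries, PowerSeries.coeff_mk, Algebra.algebraMap_self,
    RingHom.id_apply] at h
  linear_combination h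

theorem sum_range_bernoulli_two_mul_div_factorial_mul {k : ℕ} (hk : 2 ≤ k) :
    ∑ j ∈ range (k + 1), (bernoulli (2 * j) / (2 * j).factorial)
        * (bernoulli (2 * k - 2 * j) / (2 * k - 2 * j).factorial)
      = (1 - 2 * k) * (bernoulli (2 * k) / (2 * k).factorial) := by
  have h := sum_range_bernoulli_div_factorial_mul (2 * k - 1)
  have hodd : ∀ j ∈ range k, (bernoulli (2 * j + 1) / (2 * j + 1).factorial)
      * (bernoulli (2 * k - (2 * j + 1)) / (2 * k - (2 * j + 1)).factorial) = 0 := by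
    intro j hj
    have hjk := mem_range.1 hj
    rcases Nat.eq_zero_or_pos j with rfl | hj0
    · rw [bernoulli_eq_zero_of_odd (n := 2 * k - (2 * 0 + 1)) ⟨k - 1, by lia⟩ (by lia), zero_div,
        mul_zero]
    · rw [bernoulli_eq_zero_of_odd (n := 2 * j + 1) ⟨j, rfl⟩ (by lia), zero_div, zero_mul]
  rw [show 2 * k - 1 + 2 = 2 * k + 1 by lia, show 2 * k - 1 + 1 = 2 * k by lia,
    sum_range_two_mul_add_one, sum_eq_zero hodd, add_zero,
    bernoulli_eq_zero_of_odd (n := 2 * k - 1) ⟨k - 1, by lia⟩ (by lia), zero_div, sub_zero,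
    Nat.cast_sub (by lia)] at h
  rw [h]
  push_cast
  ring

end Bernoulli

section ZetaValues

variable {m n : ℕ}

theorem summable_one_div_add_one_pow (hm : 2 ≤ m) :
    Summable fun n : ℕ ↦ 1 / ((n : ℝ) + 1) ^ m := by
  simpa using (summable_nat_add_iff 1).2 (Real.summable_one_div_nat_pow.2 (show 1 < m by lia))

theorem sum_range_le_zetaVal (hm : 2 ≤ m) (N : ℕ) :
    ∑ n ∈ range N, 1 / ((n : ℝ) + 1) ^ m ≤ zetaVal m :=
  (summable_one_div_add_one_pow hm).sum_le_tsum _ fun _ _ ↦ by positivity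

theorem zetaVal_nonneg (m : ℕ) : 0 ≤ zetaVal m :=
  tsum_nonneg fun _ ↦ by positivity

theorem one_le_zetaVal (hm : 2 ≤ m) : 1 ≤ zetaVal m := by
  simpa using sum_range_le_zetaVal hm 1

theorem zetaVal_le_zetaVal (hm : 2 ≤ m) (hmn : m ≤ n) : zetaVal n ≤ zetaVal m := by
  refine (summable_one_div_add_one_pow (hm.trans hmn)).tsum_le_tsum (fun i ↦ ?_)
    (summable_one_div_add_one_pow hm)
  gcongr
  exact le_add_of_nonneg_left i.cast_nonneg

theorem zetaVal_succ_sub_sum_range_le (hm : 2 ≤ m) (N : ℕ) :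
    (N + 1) * (zetaVal (m + 1) - ∑ n ∈ range N, 1 / ((n : ℝ) + 1) ^ (m + 1))
      ≤ zetaVal m - ∑ n ∈ range N, 1 / ((n : ℝ) + 1) ^ m := by
  have hs := summable_one_div_add_one_pow hm
  have hs' := summable_one_div_add_one_pow (hm.trans m.le_succ)
  rw [zetaVal, zetaVal, ← hs.sum_add_tsum_nat_add N, ← hs'.sum_add_tsum_nat_add N,
    add_sub_cancel_left, add_sub_cancel_left, ← tsum_mul_left]
  refine (((summable_nat_add_iff N).2 hs').mul_left _).tsum_le_tsum (fun i ↦ ?_)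
    ((summable_nat_add_iff N).2 hs)
  rw [mul_one_div, pow_succ', ← div_div]
  gcongr
  rw [div_le_one (by positivity)]
  push_cast
  linarith [i.cast_nonneg (α := ℝ)]

theorem zetaVal_eq_of_hasSum {a : ℝ} (hm : m ≠ 0) (h : HasSum (fun n : ℕ ↦ 1 / (n : ℝ) ^ m) a) :
    zetaVal m = a := by
  simpa [zetaVal, hm] using ((hasSum_nat_add_iff' 1).2 h).tsum_eq

theorem zetaVal_two : zetaVal 2 = Real.pi ^ 2 / 6 :=
  zetaVal_eq_of_hasSum two_ne_zero hasSum_zeta_two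

theorem pi_sq_eq_six_mul_zetaVal_two : Real.pi ^ 2 = 6 * zetaVal 2 := by
  rw [zetaVal_two]
  ring

theorem zetaVal_four : zetaVal 4 = 2 / 5 * zetaVal 2 ^ 2 := by
  rw [zetaVal_two, zetaVal_eq_of_hasSum four_ne_zero hasSum_zeta_four]
  ring

theorem zetaVal_two_bounds : 1.644 < zetaVal 2 ∧ zetaVal 2 < 1.645 := by
  rw [zetaVal_two]
  constructor <;> nlinarith [Real.pi_gt_d4, Real.pi_lt_d4]

theorem zetaVal_three_bounds : 1.162 < zetaVal 3 ∧ zetaVal 3 < 1.236 := by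
  have hlow := sum_range_le_zetaVal (m := 3) (by norm_num) 3
  have hupp := zetaVal_succ_sub_sum_range_le le_rfl 3
  norm_num [sum_range_succ] at hlow hupp
  constructor <;> linarith [zetaVal_two_bounds.2]

theorem zetaVal_four_le : zetaVal 4 ≤ 5 / 4 := by
  rw [zetaVal_four]
  nlinarith [zetaVal_two_bounds.1, zetaVal_two_bounds.2]

theorem zetaVal_add_two_mul_zetaVal_le (hm : 2 ≤ m) :
    zetaVal (m + 2) * zetaVal m ≤ 4 / 3 * zetaVal (m + 1) ^ 2 := by
  rcases hm.eq_or_lt with rfl | hm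
  · obtain ⟨hlow, hupp⟩ := zetaVal_two_bounds
    have hpow_two : zetaVal 2 ^ 3 ≤ 1.645 ^ 3 := by gcongr
    have hpow_three : 1.162 ^ 2 ≤ zetaVal 3 ^ 2 := by gcongr; exact zetaVal_three_bounds.1.le
    calc zetaVal 4 * zetaVal 2 = 2 / 5 * zetaVal 2 ^ 3 := by rw [zetaVal_four]; ring
      _ ≤ 4 / 3 * zetaVal 3 ^ 2 := by linarith
  · have hthree : zetaVal m ≤ 4 / 3 :=
      (zetaVal_le_zetaVal (by lia) hm).trans (by linarith [zetaVal_three_bounds.2])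
    calc zetaVal (m + 2) * zetaVal m ≤ zetaVal (m + 1) * (4 / 3) :=
          mul_le_mul (zetaVal_le_zetaVal (by lia) (by lia)) hthree (zetaVal_nonneg _)
            (zetaVal_nonneg _)
      _ ≤ zetaVal (m + 1) ^ 2 * (4 / 3) := by
          gcongr
          exact le_self_pow₀ (one_le_zetaVal (by lia)) two_ne_zero
      _ = 4 / 3 * zetaVal (m + 1) ^ 2 := mul_comm _ _

theorem zetaVal'_two_mul (j : ℕ) :
    zetaVal' (2 * j) = (-1) ^ (j + 1) * (2 * Real.pi) ^ (2 * j) / 2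
      * ((bernoulli (2 * j) : ℝ) / (2 * j).factorial) := by
  rcases Nat.eq_zero_or_pos j with rfl | hj
  · norm_num [zetaVal']
  · have hpow : (2 : ℝ) ^ (2 * j) = 2 ^ (2 * j - 1) * 2 := by rw [← pow_succ]; congr 1; lia
    rw [zetaVal', if_neg (by lia), zetaVal_eq_of_hasSum (by lia) (hasSum_zeta_nat hj.ne'),
      mul_pow, hpow]
    ring

end ZetaValues

section ZetaProducts

/-- The product `ζ(2j) ζ(2k−2j)`, where `ζ(0) = −1/2`; meaningful for `j ≤ k` only, because
`2 * k - 2 * j` is a truncated subtraction. -/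
noncomputable def zetaProd (k j : ℕ) : ℝ := zetaVal' (2 * j) * zetaVal' (2 * k - 2 * j)

variable {k j m : ℕ}

theorem zetaProd_zero (hk : 0 < k) : zetaProd k 0 = -(zetaVal (2 * k) / 2) := by
  simp only [zetaProd, zetaVal', mul_zero, if_true, Nat.sub_zero]
  rw [if_neg (by lia)]
  ring

theorem zetaProd_sub (hj : j ≤ k) : zetaProd k (k - j) = zetaProd k j := by
  rw [zetaProd, zetaProd, mul_comm, show 2 * k - 2 * (k - j) = 2 * j by lia,
    show 2 * (k - j) = 2 * k - 2 * j by lia]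

theorem zetaProd_of_pos_of_lt (hj : 0 < j) (hjk : j < k) :
    zetaProd k j = zetaVal (2 * j) * zetaVal (2 * k - 2 * j) := by
  rw [zetaProd, zetaVal', zetaVal', if_neg (by lia), if_neg (by lia)]

theorem zetaVal_le_zetaProd (hj : 0 < j) (hjk : j < k) : zetaVal (2 * k) ≤ zetaProd k j := by
  rw [zetaProd_of_pos_of_lt hj hjk]
  exact (zetaVal_le_zetaVal (by lia) (by lia)).trans
    (le_mul_of_one_le_right (zetaVal_nonneg _) (one_le_zetaVal (by lia)))

theorem zetaProd_pos (hj : 0 < j) (hjk : j < k) : 0 < zetaProd k j :=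
  zero_lt_one.trans_le ((one_le_zetaVal (by lia)).trans (zetaVal_le_zetaProd hj hjk))

theorem zetaProd_one (hk : 2 ≤ k) : zetaProd k 1 = zetaVal 2 * zetaVal (2 * k - 2) :=
  zetaProd_of_pos_of_lt one_pos hk

theorem zetaVal_mul_zetaProd_le (hm : 2 ≤ m) (hmk : m < k) :
    zetaVal (2 * k) * zetaProd k m ≤ zetaProd k 1 * zetaProd k (m - 1) := by
  rw [zetaProd_of_pos_of_lt (by lia) hmk, zetaProd_one (by lia),
    zetaProd_of_pos_of_lt (by lia) (by lia)]
  have hnonneg := zetaVal_nonneg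
  have hk := zetaVal_le_zetaVal (m := 2 * k - 2) (n := 2 * k) (by lia) (by lia)
  have hm := zetaVal_le_zetaVal (m := 2 * (m - 1)) (n := 2 * m) (by lia) (by lia)
  have hkm := zetaVal_le_zetaVal (m := 2) (n := 2 * k - 2 * m) le_rfl (by lia)
  have hone := one_le_zetaVal (m := 2 * k - 2 * (m - 1)) (by lia)
  calc zetaVal (2 * k) * (zetaVal (2 * m) * zetaVal (2 * k - 2 * m))
      ≤ zetaVal (2 * k - 2) * (zetaVal (2 * (m - 1)) * zetaVal 2) := by
        gcongr <;> simp only [hnonneg, mul_nonneg]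
    _ = zetaVal 2 * zetaVal (2 * k - 2) * (zetaVal (2 * (m - 1)) * 1) := by ring
    _ ≤ zetaVal 2 * zetaVal (2 * k - 2)
          * (zetaVal (2 * (m - 1)) * zetaVal (2 * k - 2 * (m - 1))) := by
        gcongr <;> simp only [hnonneg, mul_nonneg]

theorem sum_zetaProd (hk : 2 ≤ k) :
    ∑ j ∈ range (k + 1), zetaProd k j = (k - 1 / 2) * zetaVal (2 * k) := by
  have hbernoulli :=
    congrArg (Rat.cast (K := ℝ)) (sum_range_bernoulli_two_mul_div_factorial_mul hk)
  push_cast at hbernoulli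
  have hterm : ∀ j ∈ range (k + 1), zetaProd k j = (-1) ^ k * (2 * Real.pi) ^ (2 * k) / 4
      * ((bernoulli (2 * j) / (2 * j).factorial : ℝ)
        * (bernoulli (2 * k - 2 * j) / (2 * k - 2 * j).factorial)) := by
    intro j hj
    obtain ⟨d, rfl⟩ := Nat.exists_eq_add_of_le (mem_range_succ_iff.1 hj)
    rw [zetaProd, show 2 * (j + d) - 2 * j = 2 * d by lia, zetaVal'_two_mul, zetaVal'_two_mul]
    ring
  have hzeta : zetaVal (2 * k) = zetaVal' (2 * k) := by rw [zetaVal', if_neg (by lia)]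
  rw [sum_congr rfl hterm, ← mul_sum, hbernoulli, hzeta, zetaVal'_two_mul]
  ring

end ZetaProducts

section Minimality

variable {k m : ℕ}

theorem zetaVal_sq_add_zetaProd_one_le (hk : 2 ≤ k) :
    zetaVal (2 * k) ^ 2 + 4 * zetaVal (2 * k) * zetaProd k 1
      ≤ Real.pi ^ 2 * zetaVal (2 * k - 1) ^ 2 := by
  have hsq : zetaVal (2 * k) ^ 2 ≤ zetaVal (2 * k - 1) ^ 2 :=
    pow_le_pow_left₀ (zetaVal_nonneg _) (zetaVal_le_zetaVal (by lia) (by lia)) 2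
  have hmul : zetaVal (2 * k) * zetaVal (2 * k - 2) ≤ 4 / 3 * zetaVal (2 * k - 1) ^ 2 := by
    have h := zetaVal_add_two_mul_zetaVal_le (m := 2 * k - 2) (by lia)
    rwa [show 2 * k - 2 + 2 = 2 * k by lia, show 2 * k - 2 + 1 = 2 * k - 1 by lia] at h
  have hnonneg := zetaVal_nonneg 2
  rw [zetaProd_one hk, pi_sq_eq_six_mul_zetaVal_two]
  calc zetaVal (2 * k) ^ 2 + 4 * zetaVal (2 * k) * (zetaVal 2 * zetaVal (2 * k - 2))
      = zetaVal (2 * k) ^ 2 + 4 * zetaVal 2 * (zetaVal (2 * k) * zetaVal (2 * k - 2)) := by ring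
    _ ≤ zetaVal (2 * k - 1) ^ 2 + 4 * zetaVal 2 * (4 / 3 * zetaVal (2 * k - 1) ^ 2) := by gcongr
    _ = (1 + 16 / 3 * zetaVal 2) * zetaVal (2 * k - 1) ^ 2 := by ring
    _ ≤ 6 * zetaVal 2 * zetaVal (2 * k - 1) ^ 2 := by
        gcongr
        linarith [zetaVal_two_bounds.1]

theorem two_mul_zetaProd_mul_le_sum_Ioo (hm : 3 ≤ m) (hmk : m ≤ k) :
    2 * (zetaProd k 1 * zetaProd k (m - 1))
      ≤ ∑ i ∈ Ioo 0 m, zetaProd k i * zetaProd k (m - i) := by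
  have hnonneg : ∀ i ∈ Ioo 0 m, 0 ≤ zetaProd k i * zetaProd k (m - i) := by
    intro i hi
    obtain ⟨hi0, him⟩ := mem_Ioo.1 hi
    exact (mul_pos (zetaProd_pos hi0 (by lia)) (zetaProd_pos (by lia) (by lia))).le
  have hpair := add_le_sum hnonneg (i := 1) (j := m - 1) (mem_Ioo.2 ⟨by lia, by lia⟩)
    (mem_Ioo.2 ⟨by lia, by lia⟩) (by lia)
  rw [Nat.sub_sub_self (by lia)] at hpair
  linarith

theorem zetaVal_sq_add_zetaProd_two_le (hk : 3 ≤ k) :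
    zetaVal (2 * k) ^ 2 + 4 * zetaVal (2 * k) * zetaProd k 2 ≤ 4 * zetaProd k 1 ^ 2 := by
  rw [zetaProd_one (by lia), zetaProd_of_pos_of_lt two_pos (by lia)]
  have hw := zetaVal_two_bounds.1
  have ht := one_le_zetaVal (m := 2 * k - 2) (by lia)
  have hat := zetaVal_le_zetaVal (m := 2 * k - 2) (n := 2 * k) (by lia) (by lia)
  have hat_sq : zetaVal (2 * k) ≤ zetaVal (2 * k - 2) ^ 2 :=
    hat.trans (le_self_pow₀ ht two_ne_zero)
  have hnonneg := zetaVal_nonneg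
  have hprod : zetaVal (2 * 2) * zetaVal (2 * k - 2 * 2) ≤ 5 / 4 * zetaVal 2 :=
    mul_le_mul zetaVal_four_le (zetaVal_le_zetaVal le_rfl (by lia)) (hnonneg _) (by norm_num)
  calc zetaVal (2 * k) ^ 2 + 4 * zetaVal (2 * k) * (zetaVal (2 * 2) * zetaVal (2 * k - 2 * 2))
      ≤ zetaVal (2 * k - 2) ^ 2 + 4 * zetaVal (2 * k - 2) ^ 2 * (5 / 4 * zetaVal 2) := by
        gcongr <;> simp only [hnonneg, mul_nonneg]
    _ = (1 + 5 * zetaVal 2) * zetaVal (2 * k - 2) ^ 2 := by ring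
    _ ≤ 4 * zetaVal 2 ^ 2 * zetaVal (2 * k - 2) ^ 2 := by gcongr; nlinarith
    _ = 4 * (zetaVal 2 * zetaVal (2 * k - 2)) ^ 2 := by ring

theorem zetaVal_sq_add_zetaProd_le (hm : 2 ≤ m) (hmk : m < k) :
    zetaVal (2 * k) ^ 2 + 4 * zetaVal (2 * k) * zetaProd k m
      ≤ 4 * ∑ i ∈ Ioo 0 m, zetaProd k i * zetaProd k (m - i) := by
  rcases hm.eq_or_lt with rfl | hm
  · rw [show Ioo 0 2 = {1} from rfl, sum_singleton, ← sq]
    exact zetaVal_sq_add_zetaProd_two_le hmk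
  · have hsq : zetaVal (2 * k) * zetaVal (2 * k) ≤ zetaProd k 1 * zetaProd k (m - 1) :=
      mul_le_mul (zetaVal_le_zetaProd (by lia) (by lia)) (zetaVal_le_zetaProd (by lia) (by lia))
        (zetaVal_nonneg _) (zetaProd_pos (by lia) (by lia)).le
    have hprod := zetaVal_mul_zetaProd_le hm.le hmk
    have hprod_pos := mul_pos (zetaProd_pos (k := k) (j := 1) (by lia) (by lia))
      (zetaProd_pos (k := k) (j := m - 1) (by lia) (by lia))
    linarith [two_mul_zetaProd_mul_le_sum_Ioo hm hmk.le]

theorem two_mul_pi_sq_mul_zetaVal_sq_le (hk : 2 ≤ k) :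
    2 * Real.pi ^ 2 * zetaVal (2 * k - 1) ^ 2
      ≤ zetaVal (2 * k) ^ 2 + 4 * ∑ i ∈ Ioo 0 k, zetaProd k i * zetaProd k (k - i) := by
  have hw := zetaVal_two_bounds.1
  rw [pi_sq_eq_six_mul_zetaVal_two]
  rcases hk.eq_or_lt with rfl | hk
  · have hpow_two : 1.644 ^ 3 ≤ zetaVal 2 ^ 3 := by gcongr
    have hpow_three : zetaVal 3 ^ 2 ≤ 1.236 ^ 2 := by
      have := zetaVal_three_bounds
      gcongr <;> linarith
    rw [show Ioo 0 2 = {1} from rfl, sum_singleton, zetaProd_one le_rfl]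
    calc 2 * (6 * zetaVal 2) * zetaVal 3 ^ 2 = zetaVal 2 * (12 * zetaVal 3 ^ 2) := by ring
      _ ≤ zetaVal 2 * ((4 / 25 + 4) * zetaVal 2 ^ 3) := by
        gcongr zetaVal 2 * ?_
        linarith
      _ = zetaVal 4 ^ 2 + 4 * (zetaVal 2 * zetaVal 2 * (zetaVal 2 * zetaVal 2)) := by
        rw [zetaVal_four]; ring
  · have hsum := two_mul_zetaProd_mul_le_sum_Ioo hk le_rfl
    rw [zetaProd_sub (by lia), zetaProd_one hk.le] at hsum
    have hs := zetaVal_nonneg (2 * k - 1)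
    have hst := zetaVal_le_zetaVal (m := 2 * k - 2) (n := 2 * k - 1) (by lia) (by lia)
    have hmain : 2 * (6 * zetaVal 2) * zetaVal (2 * k - 1) ^ 2
        ≤ 8 * (zetaVal 2 * zetaVal (2 * k - 2) * (zetaVal 2 * zetaVal (2 * k - 2))) :=
      calc 2 * (6 * zetaVal 2) * zetaVal (2 * k - 1) ^ 2
          = zetaVal 2 * 12 * zetaVal (2 * k - 1) ^ 2 := by ring
        _ ≤ zetaVal 2 * (8 * zetaVal 2) * zetaVal (2 * k - 2) ^ 2 := by gcongr; linarith
        _ = _ := by ring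
    linarith [sq_nonneg (zetaVal (2 * k))]

end Minimality

section HalfPolynomial

open Polynomial

/-- The polynomial `∑_{j=0}^{k} ζ(2j) ζ(2k−2j) x^j`, whose value at `z²` is the sum occurring in
`absPpoly`. -/
noncomputable def zetaPoly (k : ℕ) : ℝ[X] := ∑ j ∈ range (k + 1), C (zetaProd k j) * X ^ j

/-- The polynomial `R` with `absPpoly k = R(z²)`, see `absPpoly_eq_expand`. -/
noncomputable def halfPpoly (k : ℕ) : ℝ[X] :=
  C (4 / Real.pi ^ 2) * zetaPoly k ^ 2
    + C (zetaVal (2 * k - 1) ^ 2) * (X ^ (2 * k - 1) - C 2 * X ^ k + X ^ 1)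

variable {k m : ℕ}

theorem absPpoly_eq_expand (hk : 0 < k) : absPpoly k = expand ℝ 2 (halfPpoly k) := by
  have hzeta : expand ℝ 2 (zetaPoly k) = ∑ j ∈ range (k + 1),
      C (zetaVal' (2 * j) * zetaVal' (2 * k - 2 * j)) * X ^ (2 * j) := by
    simp only [zetaPoly, zetaProd, map_sum, map_mul, map_pow, expand_C, expand_X, ← pow_mul]
  have hpi : (C (4 / Real.pi ^ 2) : ℝ[X]) = C (2 / Real.pi) ^ 2 := by
    rw [← C_pow]; congr 1; ring
  have hsq : (X ^ (2 * k - 1) - X : ℝ[X]) ^ 2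
      = (X ^ 2) ^ (2 * k - 1) - C 2 * (X ^ 2) ^ k + (X ^ 2) ^ 1 := by
    obtain ⟨n, rfl⟩ := Nat.exists_eq_add_of_lt hk
    rw [show 2 * (0 + n + 1) - 1 = 2 * n + 1 by lia, show (C 2 : ℝ[X]) = 2 from rfl]
    ring
  rw [absPpoly, ← hzeta, halfPpoly, hsq, mul_pow, ← hpi]
  simp only [map_add, map_mul, map_sub, map_pow, expand_C, expand_X]

theorem coeff_zetaPoly (hm : m ≤ k) : (zetaPoly k).coeff m = zetaProd k m := by
  simp [zetaPoly, coeff_X_pow, hm]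

theorem natDegree_zetaPoly_le (k : ℕ) : (zetaPoly k).natDegree ≤ k :=
  natDegree_sum_le_of_forall_le _ _ fun _ hj ↦
    (natDegree_C_mul_X_pow_le _ _).trans (mem_range_succ_iff.1 hj)

theorem natDegree_halfPpoly_le (hk : 0 < k) : (halfPpoly k).natDegree ≤ 2 * k := by
  have hsq := natDegree_pow_le_of_le 2 (natDegree_zetaPoly_le k)
  rw [halfPpoly]
  generalize zetaPoly k ^ 2 = q at hsq ⊢
  compute_degree
  lia

theorem reflect_zetaPoly (k : ℕ) : (zetaPoly k).reflect k = zetaPoly k := by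
  ext i
  rw [coeff_reflect]
  by_cases hi : i ≤ k
  · rw [revAt_le hi, coeff_zetaPoly hi, coeff_zetaPoly (k.sub_le i), zetaProd_sub hi]
  · rw [revAt_eq_self_of_lt (not_le.1 hi)]

theorem reflect_halfPpoly (hk : 0 < k) : (halfPpoly k).reflect (2 * k) = halfPpoly k := by
  have hsq : (zetaPoly k ^ 2).reflect (2 * k) = zetaPoly k ^ 2 := by
    rw [sq, two_mul, reflect_mul _ _ (natDegree_zetaPoly_le k) (natDegree_zetaPoly_le k),
      reflect_zetaPoly]
  have hneg : (-(C 2 * X ^ k) : ℝ[X]) = C (-2) * X ^ k := by simp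
  rw [halfPpoly, sub_eq_add_neg, hneg, reflect_add, reflect_C_mul, hsq, reflect_C_mul,
    reflect_add, reflect_add, reflect_monomial, reflect_C_mul_X_pow, reflect_monomial,
    revAt_le (by lia), revAt_le (by lia), revAt_le (by lia),
    show 2 * k - (2 * k - 1) = 1 by lia, show 2 * k - k = k by lia]
  ring

theorem coeff_halfPpoly_sub (hk : 0 < k) (hm : m ≤ 2 * k) :
    (halfPpoly k).coeff (2 * k - m) = (halfPpoly k).coeff m := by
  rw [← revAt_le hm, ← coeff_reflect, reflect_halfPpoly hk]

theorem coeff_halfPpoly (k m : ℕ) :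
    (halfPpoly k).coeff m = 4 / Real.pi ^ 2 * (zetaPoly k ^ 2).coeff m
      + zetaVal (2 * k - 1) ^ 2 * ((if m = 2 * k - 1 then 1 else 0)
        - 2 * (if m = k then 1 else 0) + if m = 1 then 1 else 0) := by
  simp only [halfPpoly, coeff_add, coeff_C_mul, coeff_sub, coeff_X_pow]

theorem coeff_zero_halfPpoly (hk : 2 ≤ k) :
    (halfPpoly k).coeff 0 = zetaVal (2 * k) ^ 2 / Real.pi ^ 2 := by
  rw [coeff_halfPpoly, sq (zetaPoly k), mul_coeff_zero, coeff_zetaPoly k.zero_le,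
    zetaProd_zero (by lia), if_neg (by lia), if_neg (by lia), if_neg (by lia)]
  ring

theorem coeff_zetaPoly_sq (hm : 0 < m) (hmk : m ≤ k) :
    (zetaPoly k ^ 2).coeff m = -(zetaVal (2 * k) * zetaProd k m)
      + ∑ i ∈ Ioo 0 m, zetaProd k i * zetaProd k (m - i) := by
  rw [coeff_sq_eq_add_sum_Ioo _ hm, coeff_zetaPoly k.zero_le, coeff_zetaPoly hmk,
    zetaProd_zero (by lia)]
  congr 1
  · ring
  · refine sum_congr rfl fun i hi ↦ ?_
    have him := (mem_Ioo.1 hi).2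
    rw [coeff_zetaPoly (by lia), coeff_zetaPoly (by lia)]

theorem coeff_zero_halfPpoly_le_of_le (hk : 2 ≤ k) (hmk : m ≤ k) :
    (halfPpoly k).coeff 0 ≤ (halfPpoly k).coeff m := by
  rcases Nat.eq_zero_or_pos m with rfl | hm
  · exact le_rfl
  have hpi : 0 < Real.pi ^ 2 := by positivity
  rw [coeff_zero_halfPpoly hk, coeff_halfPpoly, coeff_zetaPoly_sq hm hmk, if_neg (by lia),
    div_le_iff₀ hpi, add_mul, mul_right_comm, div_mul_cancel₀ _ hpi.ne']
  rcases hmk.eq_or_lt with rfl | hmk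
  · have hself : zetaProd m m = -(zetaVal (2 * m) / 2) := by
      rw [← zetaProd_zero hm, ← zetaProd_sub m.zero_le, Nat.sub_zero]
    rw [if_pos rfl, if_neg (by lia), hself]
    linarith [two_mul_pi_sq_mul_zetaVal_sq_le hk]
  · rw [if_neg hmk.ne]
    rcases Nat.lt_or_ge 1 m with hm | hm
    · rw [if_neg hm.ne']
      linarith [zetaVal_sq_add_zetaProd_le hm hmk]
    · obtain rfl : m = 1 := by lia
      rw [if_pos rfl, show Ioo 0 1 = ∅ from rfl, sum_empty]
      linarith [zetaVal_sq_add_zetaProd_one_le hk]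

theorem coeff_zero_halfPpoly_le (hk : 2 ≤ k) (hm : m ≤ 2 * k) :
    (halfPpoly k).coeff 0 ≤ (halfPpoly k).coeff m := by
  rcases le_total m k with h | h
  · exact coeff_zero_halfPpoly_le_of_le hk h
  · rw [← coeff_halfPpoly_sub (by lia) hm]
    exact coeff_zero_halfPpoly_le_of_le hk (by lia)

theorem eval_one_halfPpoly (hk : 2 ≤ k) :
    (halfPpoly k).eval 1 = (2 * k - 1) ^ 2 * (halfPpoly k).coeff 0 := by
  have hzeta : (zetaPoly k).eval 1 = (k - 1 / 2) * zetaVal (2 * k) := by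
    simp [zetaPoly, eval_finsetSum, sum_zetaProd hk]
  rw [coeff_zero_halfPpoly hk]
  simp only [halfPpoly, eval_add, eval_mul, eval_C, eval_sub, eval_pow, eval_X, hzeta, one_pow]
  ring

end HalfPolynomial

/-- For `k ≥ 2`, the coefficients `A_j` of `|P_k(iz)|²` satisfy
`4k(k−1)|A_{4k}| = ∑_{j=0}^{4k} |A_{4k} − A_j|`. -/
theorem absPpoly_coeff_identity (k : ℕ) (hk : 2 ≤ k) :
    (4 * k * (k - 1) : ℝ) * |(absPpoly k).coeff (4 * k)|
      = ∑ j ∈ Finset.range (4 * k + 1),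
          |(absPpoly k).coeff (4 * k) - (absPpoly k).coeff j| := by
  have hfirst : (halfPpoly k).coeff (2 * k) = (halfPpoly k).coeff 0 := by
    simpa using coeff_halfPpoly_sub (m := 0) (by lia) (Nat.zero_le _)
  have hnonneg : 0 ≤ (halfPpoly k).coeff (2 * k) := by
    rw [hfirst, coeff_zero_halfPpoly hk]
    positivity
  have hmin : ∀ j ≤ 2 * k, (halfPpoly k).coeff (2 * k) ≤ (halfPpoly k).coeff j := fun j hj ↦
    hfirst ▸ coeff_zero_halfPpoly_le hk hj
  rw [absPpoly_eq_expand (by lia), show 4 * k = 2 * (2 * k) by ring,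
    sum_abs_coeff_expand_two_sub (natDegree_halfPpoly_le (by lia)) hnonneg hmin,
    Polynomial.coeff_expand_mul' two_pos, abs_of_nonneg hnonneg, eval_one_halfPpoly hk, hfirst]
  ring
end
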